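/- arXiv:2407.09815 — 2 statements merged into one kernel-verified Lean document; each statement's English description precedes it below -/
import Mathlib

section
/- Let k ∈ {0,1}, let F : ℝ × ℝ^{d+1} → ℝ be C¹ with F(0,0) = 0 and with bounded gradient ∇F, and let f, g ∈ ℓ^{2,k}(ℤ^d). Then the semilinear wave equation ∂_t² u − Δu = F(u,u') on ℤ^d with initial data u(·,0) = f, ∂_t u(·,0) = g has a global solution: for every T > 0 there exists u ∈ C²([0,T]; ℓ^{2,k}(ℤ^d)) solving the equation with these initial data. -/
/-!
The equation is the first-order system `(u, u₁)' = (u₁, Δu + F(u, u₁, ∂u))` on `X × X` with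
`X = ℓ^{2,k}(ℤ^d)`. Its right-hand side is globally Lipschitz, so solutions exist on every `[0, T]`
(`exists_global_solution`, a contraction argument in an exponentially weighted supremum norm).
The space `X` is realised as `L²` of the measure `wm d k` with mass `⟨m⟩^{2k}` at `m`.

Since `F` has bounded gradient and vanishes at the origin, the Lipschitz bound
(`exists_accel_lipschitz`) reduces to boundedness of translations and of `∂ⱼ` on `X`. For `k = 1`
the latter is not a consequence of Young's inequality, as `⟨a⟩ φⱼ(a)` is not summable. Instead, with
`y = x - a eⱼ` one has `⟨x⟩/⟨y⟩ ≤ 1 + |a|/⟨y⟩`, and `|φⱼ(a eⱼ)| ≤ 2/(1+|a|)²`, so that the conjugated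
kernel is at most `q(a) (2 q(a) + 4 q(yⱼ))` where `q(a) = 1/(1+|a|)` (`kernel_le`). As `q` is square
summable over `ℤ`, Cauchy–Schwarz in `a` followed by summation over `x` bounds `∂ⱼ` on `X`
(`eLpNorm_pdAbs_le`). The same estimate gives absolute convergence of the convolution, hence
linearity of `∂ⱼ` on `X`.
-/

open scoped BigOperators ENNReal NNReal
open MeasureTheory Filter

noncomputable section

/-- Kernel `φⱼ` of the discrete partial derivative on `ℤ^d`:
`φⱼ(m) = -4i/(π(4a²-1))` if `m = a·eⱼ`, and `0` otherwise. -/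
def phi (d : ℕ) (j : Fin d) (m : Fin d → ℤ) : ℂ :=
  if ∀ i, i ≠ j → m i = 0 then
    (-4 * Complex.I) / ((Real.pi : ℂ) * (4 * (m j : ℂ) ^ 2 - 1))
  else 0

/-- Discrete convolution on `ℤ^d`. -/
def dconv {d : ℕ} (u v : (Fin d → ℤ) → ℂ) (k : Fin d → ℤ) : ℂ :=
  ∑' m, u m * v (k - m)

/-- Discrete partial derivative `∂ⱼ u = u ∗ φⱼ`. -/
def pd {d : ℕ} (j : Fin d) (u : (Fin d → ℤ) → ℂ) : (Fin d → ℤ) → ℂ :=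
  dconv u (phi d j)

/-- Japanese bracket `⟨m⟩ = (1+|m|²)^{1/2}`. -/
def jap {d : ℕ} (m : Fin d → ℤ) : ℝ :=
  Real.sqrt (1 + ∑ i, ((m i : ℝ)) ^ 2)

open scoped Classical in
/-- `ℓ^p` norm on `ℤ^d` (valued in `ℝ≥0∞`), `1 ≤ p ≤ ∞`. -/
def lpn {d : ℕ} (p : ℝ≥0∞) (f : (Fin d → ℤ) → ℂ) : ℝ≥0∞ :=
  if p = ⊤ then ⨆ m, (‖f m‖₊ : ℝ≥0∞)
  else (∑' m, (‖f m‖₊ : ℝ≥0∞) ^ p.toReal) ^ (1 / p.toReal)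

/-- Weighted `ℓ^{2,k}` norm: the `ℓ²` norm of `m ↦ ⟨m⟩^k f(m)`. -/
def w2 {d : ℕ} (k : ℕ) (f : (Fin d → ℤ) → ℂ) : ℝ≥0∞ :=
  lpn 2 (fun m => ((jap m ^ k : ℝ) : ℂ) * f m)

/-- Discrete Laplacian on `ℤ^d`. -/
def lap {d : ℕ} (u : (Fin d → ℤ) → ℂ) (x : Fin d → ℤ) : ℂ :=
  ∑ j, (u (x + Pi.single j 1) + u (x - Pi.single j 1) - 2 * u x)

/-- Continuity of a curve `t ↦ f(·,t)` into `ℓ^{2,k}(ℤ^d)` on a set `S` of times. -/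
def ContW {d : ℕ} (k : ℕ) (S : Set ℝ) (f : ℝ → (Fin d → ℤ) → ℂ) : Prop :=
  ∀ t ∈ S, Tendsto (fun s => w2 k (fun m => f s m - f t m))
    (nhdsWithin t S) (nhds (0 : ℝ≥0∞))

/-- `f'` is the derivative (in the `ℓ^{2,k}(ℤ^d)` norm) of the curve `t ↦ f(·,t)` on `S`. -/
def DerivW {d : ℕ} (k : ℕ) (S : Set ℝ) (f f' : ℝ → (Fin d → ℤ) → ℂ) : Prop :=
  ∀ t ∈ S, Tendsto
    (fun s => w2 k (fun m => (s - t)⁻¹ • (f s m - f t m) - f' t m))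
    (nhdsWithin t (S \ {t})) (nhds (0 : ℝ≥0∞))

/-- `u ∈ C²(S; ℓ^{2,k}(ℤ^d))`, with first and second time derivatives `u1`, `u2`. -/
structure IsC2 {d : ℕ} (k : ℕ) (S : Set ℝ) (u u1 u2 : ℝ → (Fin d → ℤ) → ℂ) : Prop where
  mem0 : ∀ t ∈ S, w2 k (u t) < ⊤
  mem1 : ∀ t ∈ S, w2 k (u1 t) < ⊤
  mem2 : ∀ t ∈ S, w2 k (u2 t) < ⊤
  cont0 : ContW k S u
  cont1 : ContW k S u1
  cont2 : ContW k S u2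
  hder1 : DerivW k S u u1
  hder2 : DerivW k S u1 u2

/-- The pointwise state `(u, u') = (u, ∂ₜu, ∂₁u, …, ∂_d u)` of a solution. -/
def state {d : ℕ} (u u1 : ℝ → (Fin d → ℤ) → ℂ) (t : ℝ) (x : Fin d → ℤ) :
    ℂ × (Fin (d + 1) → ℂ) :=
  (u t x, Fin.cons (u1 t x) fun i => pd i (u t) x)

/-- `u` (with time derivatives `u1`, `u2`) is a classical solution in
`C²(S; ℓ^{2,k}(ℤ^d))` of the semilinear wave equation `∂ₜ²u - Δu = F(u,u')`
with data `u(·,0)=f`, `∂ₜu(·,0)=g`. -/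
def SLSol (d k : ℕ) (F : ℂ × (Fin (d + 1) → ℂ) → ℂ) (f g : (Fin d → ℤ) → ℂ)
    (S : Set ℝ) (u u1 u2 : ℝ → (Fin d → ℤ) → ℂ) : Prop :=
  IsC2 k S u u1 u2 ∧
    (∀ t ∈ S, ∀ x, u2 t x - lap (u t) x = F (state u u1 t x)) ∧
    (∀ x, u 0 x = f x) ∧ (∀ x, u1 0 x = g x)

/-! ### The space `ℓ^{2,k}` as an `L²` space -/

/-- The measure on `ℤ^d` with mass `⟨m⟩^{2k}` at `m`, so that `ℓ^{2,k}(ℤ^d) = L²(wm d k)`. -/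
def wm (d k : ℕ) : Measure (Fin d → ℤ) :=
  Measure.count.withDensity fun m => ENNReal.ofReal (jap m ^ k) ^ 2

lemma jap_pos {d : ℕ} (m : Fin d → ℤ) : 0 < jap m := by
  unfold jap; positivity

lemma one_add_sq_le_jap_sq {d : ℕ} (m : Fin d → ℤ) (j : Fin d) :
    1 + (m j : ℝ) ^ 2 ≤ jap m ^ 2 := by
  unfold jap
  rw [Real.sq_sqrt (by positivity)]
  have := Finset.single_le_sum (f := fun i => (m i : ℝ) ^ 2) (fun i _ => sq_nonneg _)
    (Finset.mem_univ j)
  simpa using this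

lemma abs_le_jap {d : ℕ} (m : Fin d → ℤ) (j : Fin d) : |(m j : ℝ)| ≤ jap m :=
  abs_le_of_sq_le_sq (by nlinarith [one_add_sq_le_jap_sq m j]) (jap_pos m).le

lemma one_add_abs_le_jap {d : ℕ} (m : Fin d → ℤ) (j : Fin d) :
    1 + |(m j : ℝ)| ≤ 2 * jap m := by
  have h1 := abs_le_jap m j
  have h2 : 1 ≤ jap m := by
    have := one_add_sq_le_jap_sq m j
    nlinarith [jap_pos m, sq_nonneg (m j : ℝ)]
  linarith

/-- The Japanese bracket is 1-Lipschitz along the coordinate axes. -/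
lemma jap_add_single_le {d : ℕ} (y : Fin d → ℤ) (j : Fin d) (a : ℤ) :
    jap (y + Pi.single j a) ≤ jap y + |(a : ℝ)| := by
  have h1 := abs_le_jap y j
  have h0 := jap_pos y
  have hs : jap y ^ 2 = 1 + ∑ i, ((y i : ℝ)) ^ 2 := Real.sq_sqrt (by positivity)
  have key : 1 + ∑ i, (((y + Pi.single j a : Fin d → ℤ) i : ℝ)) ^ 2
      = jap y ^ 2 + 2 * (a * y j) + a ^ 2 := by
    rw [hs]
    have : ∀ i, (((y + Pi.single j a : Fin d → ℤ) i : ℝ)) ^ 2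
        = (y i : ℝ) ^ 2 + if i = j then (2 * (a * y j) + a ^ 2 : ℝ) else 0 := by
      intro i
      by_cases hij : i = j
      · subst hij; simp; ring
      · simp [hij]
    simp_rw [this, Finset.sum_add_distrib]
    simp; ring
  have h2 : (a : ℝ) * y j ≤ |(a : ℝ)| * jap y := by
    calc (a : ℝ) * y j ≤ |(a : ℝ) * y j| := le_abs_self _
      _ = |(a : ℝ)| * |(y j : ℝ)| := abs_mul _ _
      _ ≤ _ := by gcongr
  unfold jap at h2 h0 key ⊢
  apply Real.sqrt_le_iff.2 ⟨by positivity, ?_⟩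
  rw [key]
  nlinarith [sq_abs (a : ℝ)]

lemma jap_pow_pos {d : ℕ} (k : ℕ) (m : Fin d → ℤ) : 0 < jap m ^ k := pow_pos (jap_pos m) k

lemma lintegral_wm {d k : ℕ} (h : (Fin d → ℤ) → ℝ≥0∞) :
    ∫⁻ x, h x ∂(wm d k) = ∑' x, ENNReal.ofReal (jap x ^ k) ^ 2 * h x := by
  rw [wm, lintegral_withDensity_eq_lintegral_mul _ (Measurable.of_discrete)
    (Measurable.of_discrete), lintegral_count]
  rfl

/-- Every point carries positive mass, so almost everywhere means everywhere. -/
lemma ae_wm {d k : ℕ} {p : (Fin d → ℤ) → Prop} (h : ∀ᵐ x ∂(wm d k), p x) : ∀ x, p x := by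
  have hac : Measure.count ≪ wm d k := by
    apply withDensity_absolutelyContinuous' (Measurable.of_discrete).aemeasurable
    refine Eventually.of_forall fun x => ?_
    have := jap_pow_pos k x
    simp [this]
  exact Measure.ae_count_iff.1 (hac.ae_le h)

lemma eLpNorm_wm_sq {d k : ℕ} {E : Type*} [ENorm E] (u : (Fin d → ℤ) → E) :
    eLpNorm u 2 (wm d k) ^ 2 = ∑' x, (ENNReal.ofReal (jap x ^ k) * ‖u x‖ₑ) ^ 2 := by
  rw [eLpNorm_eq_lintegral_rpow_enorm_toReal (by simp) (by simp), lintegral_wm,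
    ← ENNReal.rpow_natCast, ← ENNReal.rpow_mul]
  simp [mul_pow]

lemma w2_eq {d k : ℕ} (u : (Fin d → ℤ) → ℂ) : w2 k u = eLpNorm u 2 (wm d k) := by
  have h : w2 k u ^ 2 = eLpNorm u 2 (wm d k) ^ 2 := by
    rw [eLpNorm_wm_sq, w2, lpn, if_neg (by simp), ← ENNReal.rpow_natCast, ← ENNReal.rpow_mul]
    simp only [ENNReal.toReal_ofNat, Nat.cast_ofNat, one_div, ne_eq, OfNat.ofNat_ne_zero,
      not_false_eq_true, inv_mul_cancel₀, ENNReal.rpow_one, ENNReal.rpow_ofNat]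
    refine tsum_congr fun x => ?_
    have h1 := (jap_pow_pos k x).le
    rw [show ((‖((jap x ^ k : ℝ) : ℂ) * u x‖₊ : ℝ≥0∞)) = ‖((jap x ^ k : ℝ) : ℂ) * u x‖ₑ from rfl,
      enorm_mul]
    congr 2
    rw [← ofReal_norm, Complex.norm_real, Real.norm_of_nonneg h1]
  exact (ENNReal.pow_right_strictMono two_ne_zero).injective h

/-! ### Boundedness of translations and of the discrete derivatives -/

/-- Translation by a unit vector (`a = ±1`) is bounded on `ℓ^{2,k}` for `k ≤ 1`. -/
lemma eLpNorm_shift_le {d k : ℕ} (hk : k = 0 ∨ k = 1) (u : (Fin d → ℤ) → ℂ) (j : Fin d) (a : ℤ)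
    (ha : |(a : ℝ)| ≤ 1) :
    eLpNorm (fun x => u (x + Pi.single j a)) 2 (wm d k) ≤ 2 * eLpNorm u 2 (wm d k) := by
  rw [← ENNReal.pow_le_pow_left_iff two_ne_zero, mul_pow, eLpNorm_wm_sq, eLpNorm_wm_sq,
    ← (Equiv.addRight (Pi.single j a : Fin d → ℤ)).tsum_eq
      (fun x => (ENNReal.ofReal (jap x ^ k) * ‖u x‖ₑ) ^ 2), ← ENNReal.tsum_mul_left]
  refine ENNReal.tsum_le_tsum fun x => ?_
  rw [← mul_pow, ← mul_assoc, Equiv.coe_addRight]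
  gcongr
  rw [show (2 : ℝ≥0∞) = ENNReal.ofReal 2 by simp, ← ENNReal.ofReal_mul (by norm_num)]
  apply ENNReal.ofReal_le_ofReal
  rcases hk with rfl | rfl
  · norm_num
  · have h := jap_add_single_le (x + Pi.single j a) j (-a)
    rw [add_assoc, ← Pi.single_add, add_neg_cancel, Pi.single_zero, add_zero] at h
    push_cast at h
    rw [abs_neg] at h
    have h2 := one_add_abs_le_jap (x + Pi.single j a) j
    have h3 := one_add_sq_le_jap_sq (x + Pi.single j a) j
    have h4 := jap_pos (x + Pi.single j a)
    have : 1 ≤ jap (x + Pi.single j a) := by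
      nlinarith [sq_nonneg (((x + Pi.single j a : Fin d → ℤ) j : ℤ) : ℝ)]
    simp only [pow_one]
    linarith

/-- The weight `1/(1+|a|)`, square summable over `ℤ`. -/
def qw (a : ℤ) : ℝ := 1 / (1 + |(a : ℝ)|)

lemma qw_pos (a : ℤ) : 0 < qw a := by unfold qw; positivity

lemma tsum_qw_ne_top : ∑' a : ℤ, ENNReal.ofReal (qw a) ^ 2 ≠ ⊤ := by
  have hs : Summable fun a : ℤ => qw a ^ 2 := by
    have h : Summable fun a : ℤ => 1 / ((a : ℝ)) ^ 2 :=
      Real.summable_one_div_int_pow.2 (by norm_num)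
    have h0 : Summable fun a : ℤ => 1 / ((a : ℝ)) ^ 2 + if a = 0 then (1 : ℝ) else 0 :=
      h.add (summable_of_ne_finset_zero (s := {0}) (by intro b hb; simp at hb; simp [hb]))
    refine Summable.of_nonneg_of_le (fun a => sq_nonneg _) (fun a => ?_) h0
    by_cases ha : a = 0
    · subst ha; simp [qw]
    · have : 0 < |(a : ℝ)| := by positivity
      simp only [ha, if_false, add_zero, qw, div_pow, one_pow]
      rw [← sq_abs (a : ℝ)]
      gcongr
      linarith
  have := hs.tsum_ofReal_ne_top
  simpa [ENNReal.ofReal_pow (qw_pos _).le] using this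

lemma norm_phi_single_le {d : ℕ} (j : Fin d) (a : ℤ) :
    ‖phi d j (Pi.single j a)‖ ≤ 2 * qw a ^ 2 := by
  have hif : ∀ i, i ≠ j → (Pi.single j a : Fin d → ℤ) i = 0 := by
    intro i hi; simp [hi]
  rw [phi, if_pos hif, Pi.single_eq_same]
  have e : ((Real.pi : ℂ) * (4 * (a : ℂ) ^ 2 - 1))
      = ((Real.pi * (4 * (a : ℝ) ^ 2 - 1) : ℝ) : ℂ) := by push_cast; ring
  rw [e, norm_div, Complex.norm_real, norm_mul, norm_neg, Complex.norm_I, mul_one]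
  simp only [Complex.norm_ofNat, Real.norm_eq_abs, abs_mul, abs_of_pos Real.pi_pos, qw]
  have hpi := Real.pi_gt_three
  -- `4a² - 1` never vanishes on the integers; this is the quantitative form of that fact.
  have key : 2 * (1 + |(a : ℝ)|) ^ 2 ≤ 3 * |4 * (a : ℝ) ^ 2 - 1| := by
    by_cases ha : a = 0
    · subst ha; norm_num
    · have h1 : (1 : ℝ) ≤ |(a : ℝ)| := by
        have : (1 : ℤ) ≤ |a| := Int.one_le_abs ha
        exact_mod_cast this
      rw [← sq_abs (a : ℝ)]
      rw [abs_of_nonneg (a := 4 * |(a : ℝ)| ^ 2 - 1) (by nlinarith)]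
      nlinarith
  have hpos : 0 < |4 * (a : ℝ) ^ 2 - 1| := by nlinarith [abs_nonneg (a : ℝ)]
  rw [div_pow, one_pow, mul_one_div, div_le_div_iff₀ (by positivity) (by positivity)]
  nlinarith

/-- The kernel of `∂ⱼ`, conjugated by the weight `⟨·⟩^k`, is dominated by the sum of an absolutely
summable convolution kernel and of a kernel which is Hilbert–Schmidt along each line. -/
lemma kernel_le {d k : ℕ} (hk : k = 0 ∨ k = 1) (j : Fin d) (a : ℤ) (x : Fin d → ℤ) :
    jap x ^ k * ‖phi d j (Pi.single j a)‖
      ≤ (qw a * jap (x - Pi.single j a) ^ k) * (2 * qw a + 4 * qw (x j - a)) := by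
  set y := x - Pi.single j a with hy
  have hyj : y j = x j - a := by simp [hy]
  have hxy : jap x ^ k ≤ jap y ^ k * (1 + 2 * |(a : ℝ)| * qw (x j - a)) := by
    have hq := qw_pos (x j - a)
    rcases hk with rfl | rfl
    · simp only [pow_zero, one_mul]
      nlinarith [mul_nonneg (abs_nonneg (a : ℝ)) hq.le]
    · have h := jap_add_single_le y j a
      rw [hy, sub_add_cancel, ← hy] at h
      have h2 := one_add_abs_le_jap y j
      have h3 : 1 ≤ 2 * jap y * qw (x j - a) := by
        rw [← hyj, qw, mul_one_div, le_div_iff₀ (by positivity)]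
        linarith
      simp only [pow_one]
      nlinarith [mul_le_mul_of_nonneg_left h3 (abs_nonneg (a : ℝ))]
  have hφ := norm_phi_single_le j a
  have hJ := jap_pow_pos k y
  have hq := qw_pos (x j - a)
  have hqa := qw_pos a
  have haq : |(a : ℝ)| * qw a ≤ 1 := by
    rw [qw, mul_one_div, div_le_one (by positivity)]
    linarith
  calc jap x ^ k * ‖phi d j (Pi.single j a)‖
      ≤ (jap y ^ k * (1 + 2 * |(a : ℝ)| * qw (x j - a))) * (2 * qw a ^ 2) := by gcongr
    _ = (qw a * jap y ^ k) * (2 * qw a + 4 * (|(a : ℝ)| * qw a) * qw (x j - a)) := by ring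
    _ ≤ (qw a * jap y ^ k) * (2 * qw a + 4 * 1 * qw (x j - a)) := by gcongr
    _ = _ := by ring

lemma tsum_mul_sq_le {ι : Type*} (f g : ι → ℝ≥0∞) :
    (∑' i, f i * g i) ^ 2 ≤ (∑' i, f i ^ 2) * ∑' i, g i ^ 2 := by
  let _ : MeasurableSpace ι := ⊤
  have h := ENNReal.lintegral_mul_le_Lp_mul_Lq (Measure.count : Measure ι)
    (p := 2) (q := 2) (by constructor <;> norm_num)
    (f := f) (g := g) Measurable.of_discrete.aemeasurable Measurable.of_discrete.aemeasurable
  simp only [lintegral_count, Pi.mul_apply, ENNReal.rpow_ofNat] at h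
  calc _ ≤ _ := pow_le_pow_left' h 2
    _ = _ := by
      rw [mul_pow, ← ENNReal.rpow_natCast, ← ENNReal.rpow_natCast, ← ENNReal.rpow_mul,
        ← ENNReal.rpow_mul]
      norm_num

lemma ennreal_add_sq_le (a b : ℝ≥0∞) : (a + b) ^ 2 ≤ 2 * (a ^ 2 + b ^ 2) := by
  rcases eq_or_ne a ⊤ with rfl | ha
  · simp [ENNReal.mul_top]
  rcases eq_or_ne b ⊤ with rfl | hb
  · simp [ENNReal.mul_top]
  lift a to ℝ≥0 using ha
  lift b to ℝ≥0 using hb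
  norm_cast
  exact_mod_cast add_sq_le (a := a) (b := b)

/-- The convolution `|u| ∗ |φⱼ|`, which dominates `∂ⱼu` pointwise. -/
def pdAbs {d : ℕ} (j : Fin d) (u : (Fin d → ℤ) → ℂ) (x : Fin d → ℤ) : ℝ≥0∞ :=
  ∑' m, ‖u m‖ₑ * ‖phi d j (x - m)‖ₑ

/-- `φⱼ` lives on the `j`-th axis, so the convolution is a sum over `ℤ`. -/
lemma pdAbs_eq {d : ℕ} (j : Fin d) (u : (Fin d → ℤ) → ℂ) (x : Fin d → ℤ) :
    pdAbs j u x
      = ∑' a : ℤ, ‖u (x - Pi.single j a)‖ₑ * ‖phi d j (Pi.single j a)‖ₑ := by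
  have hinj : Function.Injective fun a : ℤ => x - Pi.single j a := by
    intro a b hab
    have := congrFun hab j
    simpa using this
  rw [pdAbs, ← hinj.tsum_eq]
  · simp
  · intro m hm
    have h : phi d j (x - m) ≠ 0 := by
      intro h0
      simp [h0] at hm
    have h2 : ∀ i, i ≠ j → (x - m) i = 0 := by
      by_contra hc
      exact h (by rw [phi, if_neg hc])
    refine ⟨x j - m j, ?_⟩
    funext i
    by_cases hi : i = j
    · subst hi; simp
    · have := h2 i hi
      simp only [Pi.sub_apply] at this
      simp [hi]
      omega

lemma weight_mul_pdAbs_le {d k : ℕ} (hk : k = 0 ∨ k = 1) (j : Fin d) (u : (Fin d → ℤ) → ℂ)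
    (x : Fin d → ℤ) :
    ENNReal.ofReal (jap x ^ k) * pdAbs j u x
      ≤ ∑' a : ℤ, (ENNReal.ofReal (qw a) * (ENNReal.ofReal (jap (x - Pi.single j a) ^ k)
          * ‖u (x - Pi.single j a)‖ₑ))
        * (2 * ENNReal.ofReal (qw a) + 4 * ENNReal.ofReal (qw (x j - a))) := by
  rw [pdAbs_eq, ← ENNReal.tsum_mul_left]
  refine ENNReal.tsum_le_tsum fun a => ?_
  have h := ENNReal.ofReal_le_ofReal (kernel_le hk j a x)
  have hq := qw_pos a
  have hq' := qw_pos (x j - a)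
  have hJ := jap_pow_pos k (x - Pi.single j a)
  rw [ENNReal.ofReal_mul (jap_pow_pos k x).le, ofReal_norm,
    ENNReal.ofReal_mul (by positivity), ENNReal.ofReal_mul hq.le,
    ENNReal.ofReal_add (by positivity) (by positivity),
    ENNReal.ofReal_mul (by norm_num), ENNReal.ofReal_mul (by norm_num)] at h
  simp only [ENNReal.ofReal_ofNat] at h
  calc _ = ‖u (x - Pi.single j a)‖ₑ
        * (ENNReal.ofReal (jap x ^ k) * ‖phi d j (Pi.single j a)‖ₑ) := by ring
    _ ≤ _ := mul_le_mul_right h _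
    _ = _ := by ring

lemma tsum_split_sq_le (b : ℤ) :
    ∑' a : ℤ, (2 * ENNReal.ofReal (qw a) + 4 * ENNReal.ofReal (qw (b - a))) ^ 2
      ≤ 40 * ∑' a : ℤ, ENNReal.ofReal (qw a) ^ 2 := by
  have hshift : ∑' a : ℤ, ENNReal.ofReal (qw (b - a)) ^ 2
      = ∑' a : ℤ, ENNReal.ofReal (qw a) ^ 2 :=
    (Equiv.subLeft b).tsum_eq (fun a => ENNReal.ofReal (qw a) ^ 2)
  calc _ ≤ ∑' a : ℤ, (8 * ENNReal.ofReal (qw a) ^ 2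
          + 32 * ENNReal.ofReal (qw (b - a)) ^ 2) := by
        refine ENNReal.tsum_le_tsum fun a => (ennreal_add_sq_le _ _).trans (le_of_eq ?_)
        ring
    _ = _ := by
        rw [ENNReal.tsum_add, ENNReal.tsum_mul_left, ENNReal.tsum_mul_left, hshift]
        ring

/-- `|u| ∗ |φⱼ|` is bounded on `ℓ^{2,k}`: Cauchy–Schwarz in the convolution variable against the
splitting provided by `kernel_le`, then summation over the lattice. -/
lemma eLpNorm_pdAbs_le {d k : ℕ} (hk : k = 0 ∨ k = 1) (j : Fin d) (u : (Fin d → ℤ) → ℂ) :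
    eLpNorm (pdAbs j u) 2 (wm d k)
      ≤ (40 * ∑' a : ℤ, ENNReal.ofReal (qw a) ^ 2) * eLpNorm u 2 (wm d k) := by
  obtain ⟨S, hS⟩ : ∃ S, S = ∑' a : ℤ, ENNReal.ofReal (qw a) ^ 2 := ⟨_, rfl⟩
  obtain ⟨U, hU⟩ : ∃ U : (Fin d → ℤ) → ℝ≥0∞,
      U = fun x => ENNReal.ofReal (jap x ^ k) * ‖u x‖ₑ := ⟨_, rfl⟩
  have hpt : ∀ x, (ENNReal.ofReal (jap x ^ k) * ‖pdAbs j u x‖ₑ) ^ 2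
      ≤ (∑' a : ℤ, ENNReal.ofReal (qw a) ^ 2 * U (x - Pi.single j a) ^ 2) * (40 * S) := by
    intro x
    rw [enorm_eq_self]
    refine (pow_le_pow_left' (weight_mul_pdAbs_le hk j u x) 2).trans
      ((tsum_mul_sq_le _ _).trans ?_)
    rw [hS, hU]
    simp_rw [mul_pow (ENNReal.ofReal (qw _))]
    exact mul_le_mul_right (tsum_split_sq_le (x j)) _
  have hUsum : ∑' x, (ENNReal.ofReal (jap x ^ k) * ‖u x‖ₑ) ^ 2 = ∑' x, U x ^ 2 := by rw [hU]
  rw [← ENNReal.pow_le_pow_left_iff two_ne_zero, mul_pow, eLpNorm_wm_sq, eLpNorm_wm_sq, hUsum,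
    ← hS]
  have hshift : ∀ a : ℤ, ∑' x : Fin d → ℤ, U (x - Pi.single j a) ^ 2 = ∑' x, U x ^ 2 := fun a =>
    (Equiv.subRight (Pi.single j a : Fin d → ℤ)).tsum_eq (fun x => U x ^ 2)
  calc _ ≤ ∑' x : Fin d → ℤ,
          (∑' a : ℤ, ENNReal.ofReal (qw a) ^ 2 * U (x - Pi.single j a) ^ 2) * (40 * S) :=
        ENNReal.tsum_le_tsum hpt
    _ = S * (∑' x, U x ^ 2) * (40 * S) := by
        rw [ENNReal.tsum_mul_right, ENNReal.tsum_comm]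
        simp_rw [ENNReal.tsum_mul_left, hshift]
        rw [ENNReal.tsum_mul_right, ← hS]
    _ = 40 * S ^ 2 * ∑' x, U x ^ 2 := by ring
    _ ≤ (40 * S) ^ 2 * ∑' x, U x ^ 2 := by
        refine mul_le_mul_left ?_ _
        rw [mul_pow]
        refine mul_le_mul_left ?_ _
        norm_num

lemma pdAbs_ne_top {d k : ℕ} (hk : k = 0 ∨ k = 1) (j : Fin d) {u : (Fin d → ℤ) → ℂ}
    (hu : eLpNorm u 2 (wm d k) ≠ ⊤) (x : Fin d → ℤ) : pdAbs j u x ≠ ⊤ := by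
  have h1 : eLpNorm (pdAbs j u) 2 (wm d k) ≠ ⊤ :=
    ne_top_of_le_ne_top (ENNReal.mul_ne_top (ENNReal.mul_ne_top (by simp) tsum_qw_ne_top) hu)
      (eLpNorm_pdAbs_le hk j u)
  have h2 := ENNReal.pow_ne_top (n := 2) h1
  rw [eLpNorm_wm_sq] at h2
  intro htop
  refine ENNReal.ne_top_of_tsum_ne_top h2 x ?_
  have := jap_pow_pos k x
  rw [htop]
  simp [ENNReal.mul_top, this]

lemma enorm_pd_le {d : ℕ} (j : Fin d) (u : (Fin d → ℤ) → ℂ) (x : Fin d → ℤ) :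
    ‖pd j u x‖ₑ ≤ pdAbs j u x := by
  refine enorm_tsum_le_tsum_enorm.trans (le_of_eq ?_)
  simp [pdAbs, enorm_mul]

lemma eLpNorm_pd_le {d k : ℕ} (hk : k = 0 ∨ k = 1) (j : Fin d) (u : (Fin d → ℤ) → ℂ) :
    eLpNorm (pd j u) 2 (wm d k)
      ≤ (40 * ∑' a : ℤ, ENNReal.ofReal (qw a) ^ 2) * eLpNorm u 2 (wm d k) :=
  (eLpNorm_mono_enorm fun x => by simpa using enorm_pd_le j u x).trans (eLpNorm_pdAbs_le hk j u)

lemma summable_pd {d k : ℕ} (hk : k = 0 ∨ k = 1) (j : Fin d) {u : (Fin d → ℤ) → ℂ}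
    (hu : eLpNorm u 2 (wm d k) ≠ ⊤) (x : Fin d → ℤ) :
    Summable fun m => u m * phi d j (x - m) := by
  have h := pdAbs_ne_top hk j hu x
  refine Summable.of_nnnorm (ENNReal.tsum_coe_ne_top_iff_summable.1 ?_)
  simpa [pdAbs, enorm_eq_nnnorm] using h

lemma pd_sub {d k : ℕ} (hk : k = 0 ∨ k = 1) (j : Fin d) {u v : (Fin d → ℤ) → ℂ}
    (hu : eLpNorm u 2 (wm d k) ≠ ⊤) (hv : eLpNorm v 2 (wm d k) ≠ ⊤) (x : Fin d → ℤ) :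
    pd j (u - v) x = pd j u x - pd j v x := by
  simp only [pd, dconv]
  rw [← (summable_pd hk j hu x).tsum_sub (summable_pd hk j hv x)]
  simp [sub_mul]

/-! ### The right-hand side of the equation is globally Lipschitz -/

/-- The acceleration `Δu + F(u, u₁, ∂₁u, …, ∂_d u)` prescribed by the equation at the state
`(u, ∂ₜu) = (u, u₁)`. -/
def accel {d : ℕ} (F : ℂ × (Fin (d + 1) → ℂ) → ℂ) (u u1 : (Fin d → ℤ) → ℂ)
    (x : Fin d → ℤ) : ℂ :=
  lap u x + F (u x, Fin.cons (u1 x) fun i => pd i u x)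

lemma eLpNorm_lap_le {d k : ℕ} (hk : k = 0 ∨ k = 1) (u : (Fin d → ℤ) → ℂ) :
    eLpNorm (lap u) 2 (wm d k) ≤ (d * 6) * eLpNorm u 2 (wm d k) := by
  have e : lap u = ∑ j : Fin d, (((fun x => u (x + Pi.single j 1))
      + fun x => u (x + Pi.single j (-1))) + (-2 : ℂ) • u) := by
    funext x
    simp only [lap, Finset.sum_apply, Pi.add_apply, Pi.smul_apply, smul_eq_mul, Pi.single_neg]
    refine Finset.sum_congr rfl fun j _ => ?_
    rw [sub_eq_add_neg x]; ring
  rw [e]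
  have hm : ∀ v : (Fin d → ℤ) → ℂ, AEStronglyMeasurable v (wm d k) := fun v =>
    StronglyMeasurable.of_discrete.aestronglyMeasurable
  refine (eLpNorm_sum_le (fun i _ => hm _) (by norm_num)).trans ?_
  have hj : ∀ j : Fin d, eLpNorm (((fun x => u (x + Pi.single j 1))
      + fun x => u (x + Pi.single j (-1))) + (-2 : ℂ) • u) 2 (wm d k)
      ≤ 6 * eLpNorm u 2 (wm d k) := by
    intro j
    calc _ ≤ 2 * eLpNorm u 2 (wm d k) + 2 * eLpNorm u 2 (wm d k)
          + 2 * eLpNorm u 2 (wm d k) := by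
          refine (eLpNorm_add_le (hm _) (hm _) (by norm_num)).trans ?_
          refine add_le_add ((eLpNorm_add_le (hm _) (hm _) (by norm_num)).trans
            (add_le_add (eLpNorm_shift_le hk u j 1 (by norm_num))
              (eLpNorm_shift_le hk u j (-1) (by norm_num)))) ?_
          rw [eLpNorm_const_smul, enorm_neg]
          gcongr
          rw [← ofReal_norm]
          simp
      _ = 6 * eLpNorm u 2 (wm d k) := by ring
  refine (Finset.sum_le_sum fun j _ => hj j).trans (le_of_eq ?_)
  simp [mul_assoc]

/-- The superposition operator `(u, u₁) ↦ F(u, u₁, ∂u)` is Lipschitz on `ℓ^{2,k}`. -/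
lemma eLpNorm_F_sub_le {d k : ℕ} (hk : k = 0 ∨ k = 1) {F : ℂ × (Fin (d + 1) → ℂ) → ℂ}
    {M : ℝ≥0} (hF : LipschitzWith M F) {u v u1 v1 : (Fin d → ℤ) → ℂ}
    (hu : eLpNorm u 2 (wm d k) ≠ ⊤) (hv : eLpNorm v 2 (wm d k) ≠ ⊤) :
    eLpNorm (fun x => F (u x, Fin.cons (u1 x) fun i => pd i u x)
        - F (v x, Fin.cons (v1 x) fun i => pd i v x)) 2 (wm d k)
      ≤ M * (eLpNorm (u - v) 2 (wm d k) + eLpNorm (u1 - v1) 2 (wm d k)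
        + d * ((40 * ∑' a : ℤ, ENNReal.ofReal (qw a) ^ 2) * eLpNorm (u - v) 2 (wm d k))) := by
  have hm : ∀ v : (Fin d → ℤ) → ℝ, AEStronglyMeasurable v (wm d k) := fun v =>
    StronglyMeasurable.of_discrete.aestronglyMeasurable
  set A : (Fin d → ℤ) → ℝ := fun x => ‖(u - v) x‖
  set B : (Fin d → ℤ) → ℝ := fun x => ‖(u1 - v1) x‖
  set P : Fin d → (Fin d → ℤ) → ℝ := fun i x => ‖pd i (u - v) x‖
  have hpt : ∀ x, ‖F (u x, Fin.cons (u1 x) fun i => pd i u x)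
        - F (v x, Fin.cons (v1 x) fun i => pd i v x)‖
        ≤ ‖((M : ℝ) • (A + B + ∑ i, P i)) x‖ := by
    intro x
    have hA : 0 ≤ A x := norm_nonneg _
    have hB : 0 ≤ B x := norm_nonneg _
    have hP : ∀ i, 0 ≤ P i x := fun i => norm_nonneg _
    have hPs : 0 ≤ ∑ i, P i x := Finset.sum_nonneg fun i _ => hP i
    have hsum : 0 ≤ A x + B x + ∑ i, P i x := by positivity
    simp only [Pi.smul_apply, Pi.add_apply, Finset.sum_apply, smul_eq_mul]
    rw [Real.norm_of_nonneg (by positivity)]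
    refine (hF.norm_sub_le _ _).trans ?_
    gcongr
    rw [Prod.norm_def]
    refine max_le ?_ ((pi_norm_le_iff_of_nonneg hsum).2 fun i => ?_)
    · have : ‖u x - v x‖ = A x := rfl
      simp only [Prod.fst_sub]
      linarith
    · refine Fin.cases ?_ (fun i => ?_) i
      · have : ‖u1 x - v1 x‖ = B x := rfl
        simp only [Prod.snd_sub, Pi.sub_apply, Fin.cons_zero]
        linarith
      · have h1 : ‖pd i u x - pd i v x‖ = P i x := by simp only [P, pd_sub hk i hu hv]
        have h2 := Finset.single_le_sum (f := fun i => P i x) (fun i _ => hP i)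
          (Finset.mem_univ i)
        simp only [Prod.snd_sub, Pi.sub_apply, Fin.cons_succ]
        linarith
  refine (eLpNorm_mono hpt).trans ?_
  rw [eLpNorm_const_smul]
  have hMn : ‖(M : ℝ)‖ₑ = M := by simp
  rw [hMn]
  gcongr
  refine (eLpNorm_add_le (hm _) (hm _) (by norm_num)).trans ?_
  refine add_le_add ((eLpNorm_add_le (hm _) (hm _) (by norm_num)).trans (le_of_eq ?_)) ?_
  · simp only [A, B, eLpNorm_norm]
  · refine (eLpNorm_sum_le (fun i _ => hm _) (by norm_num)).trans ?_
    calc _ ≤ ∑ _i : Fin d, (40 * ∑' a : ℤ, ENNReal.ofReal (qw a) ^ 2)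
          * eLpNorm (u - v) 2 (wm d k) := by
          refine Finset.sum_le_sum fun i _ => ?_
          simp only [P, eLpNorm_norm]
          exact eLpNorm_pd_le hk i (u - v)
      _ = _ := by simp

lemma exists_accel_lipschitz {d k : ℕ} (hk : k = 0 ∨ k = 1) {F : ℂ × (Fin (d + 1) → ℂ) → ℂ}
    {M : ℝ≥0} (hF : LipschitzWith M F) :
    ∃ C : ℝ≥0, ∀ u v u1 v1 : (Fin d → ℤ) → ℂ,
      eLpNorm u 2 (wm d k) ≠ ⊤ → eLpNorm v 2 (wm d k) ≠ ⊤ →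
      eLpNorm (accel F u u1 - accel F v v1) 2 (wm d k)
        ≤ C * max (eLpNorm (u - v) 2 (wm d k)) (eLpNorm (u1 - v1) 2 (wm d k)) := by
  set K : ℝ≥0∞ := 40 * ∑' a : ℤ, ENNReal.ofReal (qw a) ^ 2 with hK
  have hKt : K ≠ ⊤ := ENNReal.mul_ne_top (by simp) tsum_qw_ne_top
  have hCt : (d * 6 + M * (2 + d * K) : ℝ≥0∞) ≠ ⊤ := by finiteness
  refine ⟨(d * 6 + M * (2 + d * K) : ℝ≥0∞).toNNReal, fun u v u1 v1 hu hv => ?_⟩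
  rw [ENNReal.coe_toNNReal hCt]
  set X := eLpNorm (u - v) 2 (wm d k)
  set Y := eLpNorm (u1 - v1) 2 (wm d k)
  have e : accel F u u1 - accel F v v1 = lap (u - v)
      + fun x => F (u x, Fin.cons (u1 x) fun i => pd i u x)
        - F (v x, Fin.cons (v1 x) fun i => pd i v x) := by
    have hl : lap (u - v) = lap u - lap v := by
      funext x
      simp only [lap, Pi.sub_apply, ← Finset.sum_sub_distrib]
      refine Finset.sum_congr rfl fun j _ => by ring
    funext x
    simp only [hl, accel, Pi.sub_apply, Pi.add_apply]
    ring
  rw [e]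
  calc _ ≤ (d * 6) * X + M * (X + Y + d * (K * X)) :=
        (eLpNorm_add_le StronglyMeasurable.of_discrete.aestronglyMeasurable
          StronglyMeasurable.of_discrete.aestronglyMeasurable (by norm_num)).trans
          (add_le_add (eLpNorm_lap_le hk _) (eLpNorm_F_sub_le hk hF hu hv))
    _ ≤ (d * 6) * max X Y + M * (max X Y + max X Y + d * (K * max X Y)) := by
        gcongr <;> first | exact le_max_left _ _ | exact le_max_right _ _
    _ = _ := by ring

/-! ### Global solutions of globally Lipschitz differential equations -/

/-- An autonomous equation with globally Lipschitz right-hand side on a Banach space has a solution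
on every interval `[0, T]`. In terms of `β(t) = e^{-λt} α(t)`, the Picard map is a contraction for
the supremum norm once `λ` exceeds the Lipschitz constant. -/
lemma exists_global_solution {E : Type*} [NormedAddCommGroup E] [NormedSpace ℝ E] [CompleteSpace E]
    {V : E → E} {C : ℝ≥0} (hV : LipschitzWith C V) (x₀ : E) {T : ℝ} (hT : 0 < T) :
    ∃ α : ℝ → E, α 0 = x₀ ∧
      ∀ t ∈ Set.Icc 0 T, HasDerivWithinAt α (V (α t)) (Set.Icc 0 T) t := by
  set l : ℝ := 2 * C + 1 with hl
  have hl0 : 0 < l := by positivity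
  let ext : C(Set.Icc (0 : ℝ) T, E) → ℝ → E := fun β s =>
    Real.exp (l * s) • β (Set.projIcc 0 T hT.le s)
  have hext : ∀ β, Continuous (ext β) := fun β => by
    have := β.continuous
    have h2 : Continuous (Set.projIcc (0 : ℝ) T hT.le) := continuous_projIcc
    fun_prop
  have hVext : ∀ β, Continuous fun s => V (ext β s) := fun β => hV.continuous.comp (hext β)
  have hprim : ∀ β, Continuous fun t : ℝ => ∫ s in (0 : ℝ)..t, V (ext β s) := fun β =>
    intervalIntegral.continuous_primitive (fun a b => (hVext β).intervalIntegrable a b) 0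
  let Φ : C(Set.Icc (0 : ℝ) T, E) → C(Set.Icc (0 : ℝ) T, E) := fun β =>
    ⟨fun t => Real.exp (-(l * t)) • (x₀ + ∫ s in (0 : ℝ)..t, V (ext β s)), by
      have := hprim β
      have h2 : Continuous fun t : Set.Icc (0 : ℝ) T => ∫ s in (0 : ℝ)..t, V (ext β s) :=
        this.comp continuous_subtype_val
      fun_prop⟩
  have hΦ : ContractingWith (1 / 2) Φ := by
    refine ⟨by rw [← NNReal.coe_lt_coe]; norm_num, LipschitzWith.of_dist_le_mul fun β γ => ?_⟩
    rw [ContinuousMap.dist_le (by positivity)]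
    intro t
    have ht0 : (0 : ℝ) ≤ t := t.2.1
    have hpt : ∀ s, ‖V (ext β s) - V (ext γ s)‖ ≤ C * dist β γ * Real.exp (l * s) := by
      intro s
      refine (hV.norm_sub_le _ _).trans ?_
      rw [mul_assoc]
      gcongr
      simp only [ext]
      rw [← smul_sub, norm_smul, Real.norm_of_nonneg (Real.exp_pos _).le, mul_comm, ← dist_eq_norm]
      gcongr
      exact ContinuousMap.dist_apply_le_dist _
    have hintegral : ‖(∫ s in (0 : ℝ)..t, V (ext β s)) - ∫ s in (0 : ℝ)..t, V (ext γ s)‖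
        ≤ C * dist β γ * (Real.exp (l * t) / l) := by
      rw [← intervalIntegral.integral_sub ((hVext β).intervalIntegrable _ _)
        ((hVext γ).intervalIntegrable _ _)]
      refine (intervalIntegral.norm_integral_le_of_norm_le ht0
        (Eventually.of_forall fun s _ => hpt s)
        (Continuous.intervalIntegrable (by fun_prop) _ _)).trans ?_
      rw [intervalIntegral.integral_const_mul]
      gcongr
      have : ∫ s in (0 : ℝ)..t, Real.exp (l * s) = (Real.exp (l * t) - 1) / l := by
        rw [intervalIntegral.integral_comp_mul_left (fun s => Real.exp s) hl0.ne', integral_exp]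
        simp [div_eq_inv_mul]
      rw [this]
      gcongr
      linarith
    have e : Φ β t - Φ γ t = Real.exp (-(l * t)) •
        ((∫ s in (0 : ℝ)..t, V (ext β s)) - ∫ s in (0 : ℝ)..t, V (ext γ s)) := by
      simp only [Φ, ContinuousMap.coe_mk, ← smul_sub, add_sub_add_left_eq_sub]
    rw [dist_eq_norm, e, norm_smul, Real.norm_of_nonneg (Real.exp_pos _).le]
    calc _ ≤ Real.exp (-(l * t)) * (C * dist β γ * (Real.exp (l * t) / l)) := by gcongr
      _ = C / l * dist β γ := by
        rw [Real.exp_neg]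
        field_simp
      _ ≤ _ := by
        gcongr
        push_cast
        rw [div_le_div_iff₀ hl0 (by norm_num), hl]
        linarith
  set β := ContractingWith.fixedPoint Φ hΦ
  have hβ : Φ β = β := hΦ.fixedPoint_isFixedPt
  have hα : ∀ t ∈ Set.Icc 0 T, ext β t = x₀ + ∫ s in (0 : ℝ)..t, V (ext β s) := by
    intro t ht
    have h := congrArg (fun γ : C(Set.Icc (0 : ℝ) T, E) => γ ⟨t, ht⟩) hβ
    simp only [Φ, ContinuousMap.coe_mk] at h
    simp only [ext, Set.projIcc_of_mem hT.le ht]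
    rw [← h, smul_smul, ← Real.exp_add]
    simp [ext]
  refine ⟨ext β, by simpa using hα 0 ⟨le_rfl, hT.le⟩, fun t ht => ?_⟩
  have hd : HasDerivAt (fun t => x₀ + ∫ s in (0 : ℝ)..t, V (ext β s)) (V (ext β t)) t :=
    ((hVext β).integral_hasStrictDerivAt 0 t).hasDerivAt.const_add x₀
  exact hd.hasDerivWithinAt.congr hα (hα t ht)

/-! ### Conclusion -/

lemma w2_coe_sub {d k : ℕ} (v w : Lp ℂ 2 (wm d k)) :
    w2 k (fun m => v m - w m) = ‖v - w‖ₑ := by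
  rw [w2_eq, Lp.enorm_def]
  exact eLpNorm_congr_ae (Lp.coeFn_sub v w).symm

lemma contW_of_continuousOn {d k : ℕ} {S : Set ℝ} {h : ℝ → Lp ℂ 2 (wm d k)}
    (hh : ContinuousOn h S) : ContW k S (fun t => ⇑(h t)) := by
  intro t ht
  simp only [w2_coe_sub]
  have h1 : Tendsto (fun s => h s - h t) (nhdsWithin t S) (nhds 0) := by
    simpa using (hh t ht).tendsto.sub_const (h t)
  simpa using h1.enorm

lemma derivW_of_hasDerivWithinAt {d k : ℕ} {S : Set ℝ} {h h' : ℝ → Lp ℂ 2 (wm d k)}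
    (hh : ∀ t ∈ S, HasDerivWithinAt h (h' t) S t) :
    DerivW k S (fun t => ⇑(h t)) (fun t => ⇑(h' t)) := by
  intro t ht
  have h1 : Tendsto (fun s => slope h t s - h' t) (nhdsWithin t (S \ {t})) (nhds 0) := by
    simpa using (hasDerivWithinAt_iff_tendsto_slope.1 (hh t ht)).sub_const (h' t)
  have h2 := h1.enorm
  rw [enorm_zero] at h2
  refine h2.congr fun s => ?_
  rw [w2_eq, Lp.enorm_def, slope_def_module]
  refine eLpNorm_congr_ae ?_
  filter_upwards [Lp.coeFn_sub ((s - t)⁻¹ • (h s - h t)) (h' t),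
    Lp.coeFn_smul (s - t)⁻¹ (h s - h t), Lp.coeFn_sub (h s) (h t)] with x e1 e2 e3
  rw [e1, Pi.sub_apply, e2, Pi.smul_apply, e3, Pi.sub_apply]

/-- if `F` is `C¹` with `F(0,0) = 0` and bounded gradient, then the
semilinear discrete wave equation `∂ₜ²u - Δu = F(u,u')` with data
`f, g ∈ ℓ^{2,k}`, `k ∈ {0,1}`, has a global solution: a classical solution exists
on `[0,T]` for every `T > 0`. -/
theorem stmt17 (d : ℕ) (hd : 0 < d) (k : ℕ) (hk : k = 0 ∨ k = 1)
    (F : ℂ × (Fin (d + 1) → ℂ) → ℂ) (hF : ContDiff ℝ 1 F) (hF0 : F (0, 0) = 0)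
    (hF' : ∃ M : ℝ, ∀ z : ℂ × (Fin (d + 1) → ℂ), ‖fderiv ℝ F z‖ ≤ M)
    (f g : (Fin d → ℤ) → ℂ) (hf : w2 k f < ⊤) (hg : w2 k g < ⊤) :
    ∀ T : ℝ, 0 < T →
      ∃ u u1 u2, SLSol d k F f g (Set.Icc 0 T) u u1 u2 := by
  intro T hT
  obtain ⟨M, hM⟩ := hF'
  have hL : LipschitzWith M.toNNReal F := by
    refine lipschitzWith_of_nnnorm_fderiv_le (𝕜 := ℝ) (hF.differentiable (by norm_num)) fun z => ?_
    exact NNReal.le_toNNReal_of_coe_le (hM z)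
  obtain ⟨C, hC⟩ := exists_accel_lipschitz hk hL
  have hmeas : ∀ v : (Fin d → ℤ) → ℂ, AEStronglyMeasurable v (wm d k) := fun v =>
    StronglyMeasurable.of_discrete.aestronglyMeasurable
  have hfin : ∀ v : Lp ℂ 2 (wm d k), eLpNorm v 2 (wm d k) ≠ ⊤ := fun v => Lp.eLpNorm_ne_top v
  -- `F(0,0) = 0` makes the acceleration vanish at the zero state, hence map `ℓ^{2,k}` to itself.
  have hacc0 : accel F (0 : (Fin d → ℤ) → ℂ) 0 = 0 := by
    funext x
    have hs : (Fin.cons (0 : ℂ) fun i : Fin d => pd i (0 : (Fin d → ℤ) → ℂ) x)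
        = (0 : Fin (d + 1) → ℂ) := by
      funext i
      refine Fin.cases (by simp) (fun i => ?_) i
      simp [pd, dconv]
    simp only [accel, Pi.zero_apply, hs]
    rw [hF0]
    simp [lap]
  have hmem : ∀ v w : Lp ℂ 2 (wm d k), MemLp (accel F v w) 2 (wm d k) := by
    intro v w
    refine ⟨hmeas _, ?_⟩
    have h := hC v 0 w 0 (hfin v) (by simp)
    rw [hacc0] at h
    simp only [sub_zero] at h
    exact h.trans_lt (ENNReal.mul_lt_top ENNReal.coe_lt_top
      (max_lt (hfin v).lt_top (hfin w).lt_top))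
  let V : Lp ℂ 2 (wm d k) × Lp ℂ 2 (wm d k) → Lp ℂ 2 (wm d k) × Lp ℂ 2 (wm d k) :=
    fun p => (p.2, (hmem p.1 p.2).toLp _)
  have hV : LipschitzWith (max 1 C) V := by
    intro p q
    rw [Prod.edist_eq]
    refine max_le ?_ ?_
    · calc edist p.2 q.2 ≤ edist p q := le_max_right _ _
        _ = 1 * edist p q := (one_mul _).symm
        _ ≤ _ := by
          gcongr
          exact_mod_cast le_max_left 1 C
    · simp only [V]
      rw [Lp.edist_toLp_toLp]
      refine (hC p.1 q.1 p.2 q.2 (hfin _) (hfin _)).trans ?_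
      rw [Prod.edist_eq, Lp.edist_def, Lp.edist_def]
      gcongr
      exact_mod_cast le_max_right 1 C
  have hfm : MemLp f 2 (wm d k) := ⟨hmeas _, by rwa [← w2_eq]⟩
  have hgm : MemLp g 2 (wm d k) := ⟨hmeas _, by rwa [← w2_eq]⟩
  obtain ⟨α, hα0, hα⟩ := exists_global_solution hV (hfm.toLp f, hgm.toLp g) hT
  have hd1 : ∀ t ∈ Set.Icc 0 T,
      HasDerivWithinAt (fun t => (α t).1) (α t).2 (Set.Icc 0 T) t := fun t ht => (hα t ht).fst
  have hd2 : ∀ t ∈ Set.Icc 0 T,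
      HasDerivWithinAt (fun t => (α t).2) (V (α t)).2 (Set.Icc 0 T) t := fun t ht => (hα t ht).snd
  have hcα : ContinuousOn α (Set.Icc 0 T) := fun t ht => (hα t ht).continuousWithinAt
  have hw : ∀ v : Lp ℂ 2 (wm d k), w2 k v < ⊤ := fun v => by
    rw [w2_eq]; exact (hfin v).lt_top
  refine ⟨fun t => ⇑(α t).1, fun t => ⇑(α t).2, fun t => ⇑(V (α t)).2,
    ⟨fun t _ => hw _, fun t _ => hw _, fun t _ => hw _,
      contW_of_continuousOn hcα.fst, contW_of_continuousOn hcα.snd,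
      contW_of_continuousOn (hV.continuous.comp_continuousOn hcα).snd,
      derivW_of_hasDerivWithinAt hd1, derivW_of_hasDerivWithinAt hd2⟩, ?_, ?_, ?_⟩
  · intro t _ x
    have h := ae_wm (hmem (α t).1 (α t).2).coeFn_toLp x
    simp only [V]
    rw [h]
    simp [accel, state]
  · intro x
    simp only [hα0]
    exact ae_wm hfm.coeFn_toLp x
  · intro x
    simp only [hα0]
    exact ae_wm hgm.coeFn_toLp x
end
end

section
/- Let k ∈ {0,1} and f, g ∈ ℓ^{2,k}(ℤ^d). Then for each of the nonlinearities N(u) = |∂_t u|² and N(u) = |∂_j u|² (for a fixed j ∈ {1,…,d}), there exists T > 0 and a unique u ∈ C²([0,T]; ℓ^{2,k}(ℤ^d)) solving ∂_t² u(x,t) − Δu(x,t) = N(u)(x,t) on ℤ^d × [0,T] with u(·,0) = f and ∂_t u(·,0) = g. -/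
/-!
Local well-posedness of the discrete wave equation with nonlinearity `|∂ₜu|²` or `|∂ⱼu|²` follows
from Picard–Lindelöf for the first-order system `(u, v)' = (v, Δu + N)` in `ℓ^{2,k} × ℓ^{2,k}`,
since on a lattice all operators involved are bounded. The space `ℓ^{2,k}` is identified with
`ℓ²` through multiplication by `⟨x⟩^k`, so that the notions `ContW` and `DerivW` become
continuity and differentiability of curves in `ℓ²` (`contW_iff`, `derivW_iff`).

For `k = 1` the kernel `φⱼ` decays like `|a|⁻²`, which is not summable against the weight `⟨a⟩`.
It suffices, however, to control half of the weight: pointwise `⟨x⟩^k |w|² = |⟨x⟩^{k/2} w|²`, and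
the square of an `ℓ²` sequence is in `ℓ²`. The operator `∂ⱼ : ℓ^{2,k} → ℓ^{2,k/2}` is bounded
because `Σ |φⱼ(m)| ⟨m⟩^{k/2} < ∞` (`summable_phi`) and the weights are submultiplicative up to a
factor `2` (`wt_le`, `hw_le`), which makes it a norm-convergent series of translations (`pdH`). Both
nonlinearities thus have the form `|A(u, ∂ₜu)|²` with `A` bounded and linear, and the vector field
is Lipschitz on balls (`field_lipschitz`). This gives existence, and uniqueness by Grönwall
because a continuous curve on `[0, T]` is bounded (`wave_wellposed`).
-/

open scoped BigOperators ENNReal NNReal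
open MeasureTheory Filter

noncomputable section

/-- Classical solution in `C²(S; ℓ^{2,k}(ℤ^d))` of `∂ₜ²u - Δu = |∂ₜu|²`
with data `u(·,0)=f`, `∂ₜu(·,0)=g`. -/
def SolQt (d k : ℕ) (f g : (Fin d → ℤ) → ℂ)
    (S : Set ℝ) (u u1 u2 : ℝ → (Fin d → ℤ) → ℂ) : Prop :=
  IsC2 k S u u1 u2 ∧
    (∀ t ∈ S, ∀ x, u2 t x - lap (u t) x = ((‖u1 t x‖ ^ 2 : ℝ) : ℂ)) ∧
    (∀ x, u 0 x = f x) ∧ (∀ x, u1 0 x = g x)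

/-- Classical solution in `C²(S; ℓ^{2,k}(ℤ^d))` of `∂ₜ²u - Δu = |∂ⱼu|²`
with data `u(·,0)=f`, `∂ₜu(·,0)=g`. -/
def SolQj (d k : ℕ) (j : Fin d) (f g : (Fin d → ℤ) → ℂ)
    (S : Set ℝ) (u u1 u2 : ℝ → (Fin d → ℤ) → ℂ) : Prop :=
  IsC2 k S u u1 u2 ∧
    (∀ t ∈ S, ∀ x, u2 t x - lap (u t) x = ((‖pd j (u t) x‖ ^ 2 : ℝ) : ℂ)) ∧
    (∀ x, u 0 x = f x) ∧ (∀ x, u1 0 x = g x)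

/-! ### Local well-posedness of autonomous ODEs in a Banach space -/

theorem ode_exists {E : Type*} [NormedAddCommGroup E] [NormedSpace ℝ E] [CompleteSpace E]
    (F : E → E) (hF : ∀ R : ℝ, ∃ K : ℝ≥0, LipschitzOnWith K F (Metric.closedBall 0 R)) (x₀ : E) :
    ∃ T : ℝ, 0 < T ∧ ∃ α : ℝ → E, α 0 = x₀ ∧
      ∀ t ∈ Set.Icc 0 T, HasDerivWithinAt α (F (α t)) (Set.Icc 0 T) t := by
  obtain ⟨K, hK⟩ := hF (‖x₀‖ + 1)
  have hsub : Metric.closedBall x₀ ((1 : ℝ≥0) : ℝ) ⊆ Metric.closedBall 0 (‖x₀‖ + 1) := by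
    apply Metric.closedBall_subset_closedBall'
    simp [add_comm]
  have hl := hK.mono hsub
  set L : ℝ≥0 := K + ‖F x₀‖₊ + 1 with hL
  have hLpos : (0 : ℝ) < L := by rw [hL]; positivity
  have hb : ∀ x ∈ Metric.closedBall x₀ ((1 : ℝ≥0) : ℝ), ‖F x‖ ≤ L := by
    intro x hx
    have h1 := hl.norm_sub_le hx (Metric.mem_closedBall_self (by simp))
    have h2 : ‖x - x₀‖ ≤ 1 := by simpa using mem_closedBall_iff_norm.1 hx
    have h3 : ‖F x‖ ≤ ‖F x - F x₀‖ + ‖F x₀‖ := norm_le_norm_sub_add _ _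
    have h4 : (K : ℝ) * ‖x - x₀‖ ≤ K * 1 := by gcongr
    have h5 : (L : ℝ) = K + ‖F x₀‖ + 1 := by simp [hL]
    linarith
  have hT : (0 : ℝ) < (L : ℝ)⁻¹ := by positivity
  have hP : IsPicardLindelof (fun _ => F) (tmin := 0) (tmax := (L : ℝ)⁻¹)
      ⟨0, by simp⟩ x₀ 1 0 L K := by
    refine IsPicardLindelof.of_time_independent hb hl ?_
    simp [hLpos.ne']
  obtain ⟨α, h0, hα⟩ := hP.exists_eq_forall_mem_Icc_hasDerivWithinAt₀
  exact ⟨_, hT, α, h0, hα⟩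

theorem ode_unique {E : Type*} [NormedAddCommGroup E] [NormedSpace ℝ E]
    (F : E → E) (hF : ∀ R : ℝ, ∃ K : ℝ≥0, LipschitzOnWith K F (Metric.closedBall 0 R))
    {T : ℝ} {α β : ℝ → E}
    (hα : ∀ t ∈ Set.Icc 0 T, HasDerivWithinAt α (F (α t)) (Set.Icc 0 T) t)
    (hβ : ∀ t ∈ Set.Icc 0 T, HasDerivWithinAt β (F (β t)) (Set.Icc 0 T) t)
    (h0 : α 0 = β 0) : Set.EqOn α β (Set.Icc 0 T) := by
  have cα : ContinuousOn α (Set.Icc 0 T) := fun t ht => (hα t ht).continuousWithinAt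
  have cβ : ContinuousOn β (Set.Icc 0 T) := fun t ht => (hβ t ht).continuousWithinAt
  obtain ⟨A, hA⟩ := isCompact_Icc.exists_bound_of_continuousOn cα
  obtain ⟨B, hB⟩ := isCompact_Icc.exists_bound_of_continuousOn cβ
  obtain ⟨K, hK⟩ := hF (max A B)
  have conv : ∀ γ : ℝ → E,
      (∀ t ∈ Set.Icc 0 T, HasDerivWithinAt γ (F (γ t)) (Set.Icc 0 T) t) →
      ∀ t ∈ Set.Ico 0 T, HasDerivWithinAt γ (F (γ t)) (Set.Ici t) t := by
    intro γ hγ t ht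
    refine (hγ t ⟨ht.1, ht.2.le⟩).mono_of_mem_nhdsWithin ?_
    exact mem_of_superset (Icc_mem_nhdsGE ht.2) (Set.Icc_subset_Icc_left ht.1)
  refine ODE_solution_unique_of_mem_Icc_right (v := fun _ => F)
    (s := fun _ => Metric.closedBall 0 (max A B)) (K := K)
    (fun _ _ => hK) cα (conv α hα) ?_ cβ (conv β hβ) ?_ h0
  · intro t ht
    simpa using Or.inl (hA t ⟨ht.1, ht.2.le⟩)
  · intro t ht
    simpa using Or.inr (hB t ⟨ht.1, ht.2.le⟩)

/-! ### The unweighted sequence space -/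

/-- The Hilbert space `ℓ²(ℤ^d)`. -/
abbrev H (d : ℕ) : Type := lp (fun _ : Fin d → ℤ => ℂ) 2

theorem memH_iff {d : ℕ} {f : (Fin d → ℤ) → ℂ} :
    Memℓp f 2 ↔ Summable fun x => ‖f x‖ ^ 2 := by
  rw [memℓp_gen_iff (by norm_num)]
  simp

theorem normH_sq {d : ℕ} (U : H d) : ‖U‖ ^ 2 = ∑' x, ‖U x‖ ^ 2 := by
  have := lp.norm_rpow_eq_tsum (p := 2) (by norm_num) U
  simpa using this

theorem summable_sq {d : ℕ} (U : H d) : Summable fun x => ‖U x‖ ^ 2 :=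
  memH_iff.1 (lp.memℓp U)

theorem norm_apply_le {d : ℕ} (U : H d) (x : Fin d → ℤ) : ‖U x‖ ≤ ‖U‖ :=
  lp.norm_apply_le_norm (by norm_num) U x

theorem memH_shift {d : ℕ} (U : H d) (m : Fin d → ℤ) (f : (Fin d → ℤ) → ℂ) (C : ℝ)
    (h : ∀ x, ‖f x‖ ≤ C * ‖U (x - m)‖) : Memℓp f 2 := by
  rw [memH_iff]
  have hs : Summable fun x => C ^ 2 * ‖U (x - m)‖ ^ 2 :=
    (((Equiv.subRight m).summable_iff (f := fun x => ‖U x‖ ^ 2)).2 (summable_sq U)).mul_left _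
  refine Summable.of_nonneg_of_le (fun x => by positivity) (fun x => ?_) hs
  rw [← mul_pow]
  exact pow_le_pow_left₀ (norm_nonneg _) (h x) 2

theorem normH_le_shift {d : ℕ} (U : H d) (m : Fin d → ℤ) (V : H d) (C : ℝ) (hC : 0 ≤ C)
    (h : ∀ x, ‖V x‖ ≤ C * ‖U (x - m)‖) : ‖V‖ ≤ C * ‖U‖ := by
  refine le_of_pow_le_pow_left₀ two_ne_zero (by positivity) ?_
  have hs : Summable fun x => C ^ 2 * ‖U (x - m)‖ ^ 2 :=
    (((Equiv.subRight m).summable_iff (f := fun x => ‖U x‖ ^ 2)).2 (summable_sq U)).mul_left _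
  rw [mul_pow, normH_sq, normH_sq, ← (Equiv.subRight m).tsum_eq (fun x => ‖U x‖ ^ 2),
    ← tsum_mul_left]
  refine (summable_sq V).tsum_le_tsum (fun x => ?_) hs
  rw [Equiv.subRight_apply, ← mul_pow]
  exact pow_le_pow_left₀ (norm_nonneg _) (h x) 2

/-- The weighted translation `U ↦ (x ↦ c x * U (x - m))` on `ℓ²`, for a bounded coefficient `c`. -/
def shiftCLM {d : ℕ} (m : Fin d → ℤ) (c : (Fin d → ℤ) → ℂ) (C : ℝ) (hc : ∀ x, ‖c x‖ ≤ C) :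
    H d →L[ℂ] H d :=
  LinearMap.mkContinuous
    { toFun := fun U => ⟨fun x => c x * U (x - m), memH_shift U m _ C (fun x => by
        rw [norm_mul]; exact mul_le_mul_of_nonneg_right (hc x) (norm_nonneg _))⟩
      map_add' := fun U V => by
        ext x
        exact mul_add _ _ _
      map_smul' := fun a U => by
        ext x
        simp [mul_left_comm] }
    C (fun U => normH_le_shift U m _ C ((norm_nonneg _).trans (hc 0)) (fun x => by
        change ‖c x * U (x - m)‖ ≤ _
        rw [norm_mul]; exact mul_le_mul_of_nonneg_right (hc x) (norm_nonneg _)))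

theorem shiftCLM_apply {d : ℕ} (m : Fin d → ℤ) (c : (Fin d → ℤ) → ℂ) (C : ℝ)
    (hc : ∀ x, ‖c x‖ ≤ C) (U : H d) (x : Fin d → ℤ) :
    shiftCLM m c C hc U x = c x * U (x - m) := rfl

theorem shiftCLM_norm_le {d : ℕ} (m : Fin d → ℤ) (c : (Fin d → ℤ) → ℂ) (C : ℝ)
    (hc : ∀ x, ‖c x‖ ≤ C) : ‖shiftCLM m c C hc‖ ≤ C :=
  LinearMap.mkContinuous_norm_le _ ((norm_nonneg _).trans (hc 0)) _

/-- The pointwise square `Z ↦ |Z|²` on `ℓ²`; it maps into `ℓ²` because `ℓ² ⊆ ℓ^∞`. -/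
def sqH {d : ℕ} (Z : H d) : H d :=
  ⟨fun x => ((‖Z x‖ ^ 2 : ℝ) : ℂ), memH_shift Z 0 _ ‖Z‖ (fun x => by
    rw [Complex.norm_real, Real.norm_of_nonneg (by positivity), sub_zero, sq]
    exact mul_le_mul_of_nonneg_right (norm_apply_le Z x) (norm_nonneg _))⟩

theorem sqH_apply {d : ℕ} (Z : H d) (x : Fin d → ℤ) :
    sqH Z x = ((‖Z x‖ ^ 2 : ℝ) : ℂ) := rfl

theorem sqH_sub_le {d : ℕ} (Y Z : H d) : ‖sqH Y - sqH Z‖ ≤ (‖Y‖ + ‖Z‖) * ‖Y - Z‖ := by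
  refine normH_le_shift (Y - Z) 0 _ _ (by positivity) (fun x => ?_)
  have h1 : (sqH Y - sqH Z) x = (((‖Y x‖ + ‖Z x‖) * (‖Y x‖ - ‖Z x‖) : ℝ) : ℂ) := by
    rw [lp.coeFn_sub, Pi.sub_apply, sqH_apply, sqH_apply]
    push_cast
    ring
  rw [h1, Complex.norm_real, norm_mul, sub_zero, lp.coeFn_sub, Pi.sub_apply,
    Real.norm_of_nonneg (by positivity)]
  gcongr
  · exact norm_apply_le Y x
  · exact norm_apply_le Z x
  · exact abs_norm_sub_norm_le _ _

/-! ### Weights -/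

theorem one_le_jap {d : ℕ} (x : Fin d → ℤ) : 1 ≤ jap x := by
  rw [jap, Real.one_le_sqrt]
  have : 0 ≤ ∑ i, ((x i : ℝ)) ^ 2 := Finset.sum_nonneg fun i _ => sq_nonneg _
  linarith

theorem jap_le {d : ℕ} (x m : Fin d → ℤ) : jap x ≤ 2 * jap m * jap (x - m) := by
  have hn : ∀ y : Fin d → ℤ, 0 ≤ ∑ i, ((y i : ℝ)) ^ 2 :=
    fun y => Finset.sum_nonneg fun i _ => sq_nonneg _
  have hsq : ∀ y : Fin d → ℤ, jap y ^ 2 = 1 + ∑ i, ((y i : ℝ)) ^ 2 := fun y =>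
    Real.sq_sqrt (by linarith [hn y])
  have hpos : ∀ y : Fin d → ℤ, 0 ≤ jap y := fun y => Real.sqrt_nonneg _
  refine le_of_pow_le_pow_left₀ two_ne_zero
    (mul_nonneg (mul_nonneg zero_le_two (hpos m)) (hpos _)) ?_
  rw [mul_pow, mul_pow, hsq, hsq, hsq]
  have h1 : ∑ i, ((x i : ℝ)) ^ 2 ≤
      2 * ∑ i, ((m i : ℝ)) ^ 2 + 2 * ∑ i, (((x - m) i : ℤ) : ℝ) ^ 2 := by
    rw [Finset.mul_sum, Finset.mul_sum, ← Finset.sum_add_distrib]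
    refine Finset.sum_le_sum fun i _ => ?_
    rw [Pi.sub_apply]
    push_cast
    nlinarith [sq_nonneg ((x i : ℝ) - 2 * m i)]
  nlinarith [hn m, hn (x - m), mul_nonneg (hn m) (hn (x - m))]

/-- The weight `⟨x⟩^k`. -/
def wt {d : ℕ} (k : ℕ) (x : Fin d → ℤ) : ℝ := jap x ^ k

/-- The half weight `⟨x⟩^{k/2}`. -/
def hw {d : ℕ} (k : ℕ) (x : Fin d → ℤ) : ℝ := Real.sqrt (wt k x)

theorem one_le_wt {d : ℕ} (k : ℕ) (x : Fin d → ℤ) : 1 ≤ wt k x :=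
  one_le_pow₀ (one_le_jap x)

theorem wt_pos {d : ℕ} (k : ℕ) (x : Fin d → ℤ) : 0 < wt k x :=
  zero_lt_one.trans_le (one_le_wt k x)

theorem wt_ne {d : ℕ} (k : ℕ) (x : Fin d → ℤ) : (wt k x : ℂ) ≠ 0 :=
  Complex.ofReal_ne_zero.2 (wt_pos k x).ne'

theorem one_le_hw {d : ℕ} (k : ℕ) (x : Fin d → ℤ) : 1 ≤ hw k x :=
  Real.one_le_sqrt.2 (one_le_wt k x)

theorem hw_sq {d : ℕ} (k : ℕ) (x : Fin d → ℤ) : hw k x ^ 2 = wt k x :=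
  Real.sq_sqrt (wt_pos k x).le

theorem wt_le {d k : ℕ} (hk : k = 0 ∨ k = 1) (x m : Fin d → ℤ) :
    wt k x ≤ 2 * wt k m * wt k (x - m) := by
  rcases hk with rfl | rfl
  · simp [wt]
  · simpa [wt] using jap_le x m

theorem hw_le {d k : ℕ} (hk : k = 0 ∨ k = 1) (x m : Fin d → ℤ) :
    hw k x ≤ 2 * hw k m * hw k (x - m) := by
  have h1 := one_le_hw k m
  have h2 := one_le_hw k (x - m)
  refine le_of_pow_le_pow_left₀ two_ne_zero (by positivity) ?_
  rw [mul_pow, mul_pow, hw_sq, hw_sq, hw_sq]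
  have := wt_le hk x m
  have := mul_pos (wt_pos k m) (wt_pos k (x - m))
  nlinarith

/-! ### Identification of `ℓ^{2,k}` with `ℓ²` -/

/-- The isometry `ℓ² → ℓ^{2,k}`, `U ↦ ⟨·⟩^{-k} U`. -/
def un {d : ℕ} (k : ℕ) (U : H d) (x : Fin d → ℤ) : ℂ := U x / (wt k x : ℂ)

theorem wt_mul_un {d : ℕ} (k : ℕ) (U : H d) (x : Fin d → ℤ) :
    (wt k x : ℂ) * un k U x = U x := mul_div_cancel₀ _ (wt_ne k x)

theorem w2_eq_rpow {d : ℕ} (k : ℕ) (f : (Fin d → ℤ) → ℂ) :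
    w2 k f = (∑' m, ENNReal.ofReal (‖(wt k m : ℂ) * f m‖ ^ 2)) ^ (1 / 2 : ℝ) := by
  rw [w2, lpn, if_neg (by norm_num), ENNReal.toReal_ofNat]
  congr 1
  refine tsum_congr fun m => ?_
  rw [ENNReal.ofReal_pow (norm_nonneg _), ofReal_norm, ENNReal.rpow_ofNat]
  rfl

theorem w2_eq_s18 {d k : ℕ} {f : (Fin d → ℤ) → ℂ} {U : H d}
    (h : ∀ m, U m = (wt k m : ℂ) * f m) : w2 k f = ‖U‖ₑ := by
  rw [w2_eq_rpow]
  simp_rw [← h]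
  rw [← ENNReal.ofReal_tsum_of_nonneg (fun m => by positivity) (summable_sq U), ← normH_sq,
    ← ofReal_norm, ENNReal.ofReal_rpow_of_nonneg (by positivity) (by norm_num),
    ← Real.sqrt_eq_rpow, Real.sqrt_sq (norm_nonneg _)]

theorem exists_of_w2_lt {d k : ℕ} {f : (Fin d → ℤ) → ℂ} (hf : w2 k f < ⊤) :
    ∃ U : H d, ∀ m, U m = (wt k m : ℂ) * f m := by
  refine ⟨⟨fun m => (wt k m : ℂ) * f m, memH_iff.2 ?_⟩, fun m => rfl⟩
  rw [w2_eq_rpow] at hf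
  have h1 : ∑' m, ENNReal.ofReal (‖(wt k m : ℂ) * f m‖ ^ 2) ≠ ⊤ := by
    intro h
    rw [h, ENNReal.top_rpow_of_pos (by norm_num)] at hf
    exact lt_irrefl _ hf
  have h2 := ENNReal.summable_toReal h1
  refine h2.congr fun m => ?_
  rw [ENNReal.toReal_ofReal (by positivity)]

theorem un_eq {d k : ℕ} {f : (Fin d → ℤ) → ℂ} {U : H d}
    (h : ∀ m, U m = (wt k m : ℂ) * f m) : un k U = f := by
  funext m
  rw [un, h, mul_div_cancel_left₀ _ (wt_ne k m)]

theorem contW_iff {d k : ℕ} {S : Set ℝ} {f : ℝ → (Fin d → ℤ) → ℂ} {U : ℝ → H d}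
    (h : ∀ t ∈ S, ∀ m, U t m = (wt k m : ℂ) * f t m) :
    ContW k S f ↔ ContinuousOn U S := by
  refine forall₂_congr fun t ht => ?_
  rw [ContinuousWithinAt, tendsto_iff_edist_tendsto_0]
  refine tendsto_congr' ?_
  filter_upwards [self_mem_nhdsWithin] with s hs
  rw [edist_eq_enorm_sub]
  refine w2_eq_s18 fun m => ?_
  rw [lp.coeFn_sub, Pi.sub_apply, h s hs, h t ht, mul_sub]

theorem derivW_iff {d k : ℕ} {S : Set ℝ} {f f' : ℝ → (Fin d → ℤ) → ℂ} {U U' : ℝ → H d}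
    (h : ∀ t ∈ S, ∀ m, U t m = (wt k m : ℂ) * f t m)
    (h' : ∀ t ∈ S, ∀ m, U' t m = (wt k m : ℂ) * f' t m) :
    DerivW k S f f' ↔ ∀ t ∈ S, HasDerivWithinAt U (U' t) S t := by
  refine forall₂_congr fun t ht => ?_
  rw [hasDerivWithinAt_iff_tendsto_slope, tendsto_iff_edist_tendsto_0]
  refine tendsto_congr' ?_
  filter_upwards [self_mem_nhdsWithin] with s hs
  rw [edist_eq_enorm_sub]
  refine w2_eq_s18 fun m => ?_
  rw [slope_def_module, lp.coeFn_sub, Pi.sub_apply, lp.coeFn_smul, Pi.smul_apply, lp.coeFn_sub,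
    Pi.sub_apply, h s hs.1, h t ht, h' t ht, Complex.real_smul, Complex.real_smul]
  ring

/-! ### The Laplacian and the derivatives as bounded operators -/

/-- The translation by `m` on `ℓ^{2,k}`, transported to `ℓ²`. -/
def wtTrans {d k : ℕ} (hk : k = 0 ∨ k = 1) (m : Fin d → ℤ) : H d →L[ℂ] H d :=
  shiftCLM m (fun x => ((wt k x / wt k (x - m) : ℝ) : ℂ)) (2 * wt k m) (fun x => by
    have h1 := wt_pos k x
    have h2 := wt_pos k (x - m)
    rw [Complex.norm_real, Real.norm_of_nonneg (by positivity), div_le_iff₀ h2]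
    exact wt_le hk x m)

theorem wtTrans_apply {d k : ℕ} (hk : k = 0 ∨ k = 1) (m : Fin d → ℤ) (U : H d) (x : Fin d → ℤ) :
    wtTrans hk m U x = (wt k x : ℂ) * un k U (x - m) := by
  rw [wtTrans, shiftCLM_apply, un]
  push_cast
  ring

/-- The discrete Laplacian on `ℓ^{2,k}`, transported to `ℓ²`. -/
def lapH {d k : ℕ} (hk : k = 0 ∨ k = 1) : H d →L[ℂ] H d :=
  ∑ j : Fin d, (wtTrans hk (-Pi.single j 1) + wtTrans hk (Pi.single j 1)
    - (2 : ℂ) • ContinuousLinearMap.id ℂ (H d))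

theorem lapH_apply {d k : ℕ} (hk : k = 0 ∨ k = 1) (U : H d) (x : Fin d → ℤ) :
    lapH hk U x = (wt k x : ℂ) * lap (un k U) x := by
  rw [lapH, sum_apply, lp.coeFn_sum, Finset.sum_apply, lap, Finset.mul_sum]
  refine Finset.sum_congr rfl fun j _ => ?_
  simp only [sub_apply, add_apply,
    smul_apply, ContinuousLinearMap.id_apply, lp.coeFn_sub, lp.coeFn_add,
    lp.coeFn_smul, Pi.sub_apply, Pi.add_apply, Pi.smul_apply, wtTrans_apply, sub_neg_eq_add,
    smul_eq_mul]
  rw [← wt_mul_un k U x]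
  ring

/-- The map `u ↦ c u(· - m)` from `ℓ^{2,k}` to the half-weighted space `ℓ^{2,k/2}`, with both
spaces transported to `ℓ²`. Its norm is at most `‖c‖ * (2⟨m⟩^{k/2})`. -/
def halfTrans {d k : ℕ} (hk : k = 0 ∨ k = 1) (c : ℂ) (m : Fin d → ℤ) : H d →L[ℂ] H d :=
  shiftCLM m (fun x => c * ((hw k x / wt k (x - m) : ℝ) : ℂ)) (‖c‖ * (2 * hw k m)) (fun x => by
    have h1 := one_le_hw k x
    have h2 := one_le_hw k (x - m)
    have h3 := one_le_hw k m
    rw [norm_mul, Complex.norm_real, Real.norm_of_nonneg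
      (div_nonneg (by linarith) (wt_pos k (x - m)).le)]
    gcongr
    rw [div_le_iff₀ (wt_pos k (x - m)), ← hw_sq k (x - m)]
    have h4 : hw k (x - m) ≤ hw k (x - m) ^ 2 := by nlinarith
    calc hw k x ≤ 2 * hw k m * hw k (x - m) := hw_le hk x m
      _ ≤ 2 * hw k m * hw k (x - m) ^ 2 := by gcongr)

theorem halfTrans_apply {d k : ℕ} (hk : k = 0 ∨ k = 1) (c : ℂ) (m : Fin d → ℤ) (U : H d)
    (x : Fin d → ℤ) : halfTrans hk c m U x = (hw k x : ℂ) * (c * un k U (x - m)) := by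
  rw [halfTrans, shiftCLM_apply, un]
  push_cast
  ring

theorem halfTrans_norm_le {d k : ℕ} (hk : k = 0 ∨ k = 1) (c : ℂ) (m : Fin d → ℤ) :
    ‖halfTrans hk c m‖ ≤ ‖c‖ * (2 * hw k m) := shiftCLM_norm_le _ _ _ _

/-- The kernel `φⱼ` is summable against the half weight, since `|φⱼ(a eⱼ)| ≲ ⟨a⟩⁻²`; against the
full weight `⟨m⟩` it is not. -/
theorem summable_phi {d k : ℕ} (hk : k = 0 ∨ k = 1) (j : Fin d) :
    Summable fun m => ‖phi d j m‖ * (2 * hw k m) := by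
  have hinj : Function.Injective (fun a : ℤ => (Pi.single j a : Fin d → ℤ)) :=
    Pi.single_injective (M := fun _ : Fin d => ℤ) j
  refine (hinj.summable_iff ?_).1 ?_
  · intro m hm
    have : ¬ ∀ i, i ≠ j → m i = 0 := by
      intro h
      refine hm ⟨m j, ?_⟩
      funext i
      by_cases hi : i = j
      · subst hi; simp
      · simp [hi, h i hi]
    rw [phi, if_neg this]
    simp
  · refine Summable.of_norm_bounded_eventually
      ((Real.summable_abs_int_rpow (b := 3 / 2) (by norm_num)).mul_left 4) ?_
    have h0 : ({0} : Set ℤ)ᶜ ∈ (cofinite : Filter ℤ) :=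
      (Set.finite_singleton 0).compl_mem_cofinite
    filter_upwards [h0] with a ha
    have ha1 : (1 : ℝ) ≤ |(a : ℝ)| := by
      have : (1 : ℤ) ≤ |a| := Int.one_le_abs ha
      exact_mod_cast this
    set r : ℝ := |(a : ℝ)| with hr
    have hr2 : (a : ℝ) ^ 2 = r ^ 2 := by rw [hr, sq_abs]
    have hjap : jap (Pi.single j a : Fin d → ℤ) ≤ 2 * r := by
      have : ∑ i, (((Pi.single j a : Fin d → ℤ) i : ℤ) : ℝ) ^ 2 = r ^ 2 := by
        rw [Finset.sum_eq_single j]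
        · simp [hr2]
        · intro i _ hi
          simp [hi]
        · simp
      rw [jap, this, Real.sqrt_le_left (by positivity)]
      nlinarith
    have hwt : wt k (Pi.single j a : Fin d → ℤ) ≤ 2 * r := by
      rcases hk with rfl | rfl
      · simp only [wt, pow_zero]; linarith
      · simpa [wt] using hjap
    have hhw : hw k (Pi.single j a : Fin d → ℤ) ≤ 3 / 2 * Real.sqrt r := by
      rw [hw, Real.sqrt_le_left (by positivity), mul_pow, Real.sq_sqrt (by positivity)]
      linarith
    have hphi : ‖phi d j (Pi.single j a)‖ ≤ 4 / (3 * (3 * r ^ 2)) := by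
      have hc : ∀ i, i ≠ j → (Pi.single j a : Fin d → ℤ) i = 0 := fun i hi => by simp [hi]
      rw [phi, if_pos hc, Pi.single_eq_same]
      have : (Real.pi : ℂ) * (4 * (a : ℂ) ^ 2 - 1)
          = ((Real.pi * (4 * (a : ℝ) ^ 2 - 1) : ℝ) : ℂ) := by push_cast; ring
      have h3 : 3 * r ^ 2 ≤ 4 * r ^ 2 - 1 := by nlinarith
      rw [this, norm_div, Complex.norm_real, hr2, Real.norm_of_nonneg
        (mul_nonneg Real.pi_pos.le (by nlinarith))]
      simp only [norm_mul, norm_neg, Complex.norm_ofNat, Complex.norm_I, mul_one]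
      gcongr
      exact Real.pi_gt_three.le
    have hpow : r ^ (-(3 / 2) : ℝ) = Real.sqrt r / r ^ 2 := by
      rw [Real.sqrt_eq_rpow, ← Real.rpow_natCast r 2, ← Real.rpow_sub (by linarith)]
      norm_num
    have hhw0 := one_le_hw k (Pi.single j a : Fin d → ℤ)
    rw [Function.comp_apply, norm_mul, norm_norm, Real.norm_of_nonneg (by linarith), hpow]
    calc ‖phi d j (Pi.single j a)‖ * (2 * hw k (Pi.single j a : Fin d → ℤ))
        ≤ 4 / (3 * (3 * r ^ 2)) * (2 * (3 / 2 * Real.sqrt r)) := by gcongr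
      _ = 4 / 3 * (Real.sqrt r / r ^ 2) := by field_simp
      _ ≤ 4 * (Real.sqrt r / r ^ 2) := by gcongr; norm_num

/-- The derivative `∂ⱼ` as an operator from `ℓ^{2,k}` to `ℓ^{2,k/2}`, with both spaces transported
to `ℓ²`, written as a norm-convergent series of translations. -/
def pdH {d k : ℕ} (hk : k = 0 ∨ k = 1) (j : Fin d) : H d →L[ℂ] H d :=
  ∑' m, halfTrans hk (phi d j m) m

theorem pdH_apply {d k : ℕ} (hk : k = 0 ∨ k = 1) (j : Fin d) (U : H d) (x : Fin d → ℤ) :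
    pdH hk j U x = (hw k x : ℂ) * pd j (un k U) x := by
  have hs : Summable fun m => halfTrans hk (phi d j m) m :=
    Summable.of_norm_bounded (summable_phi hk j) fun m => halfTrans_norm_le hk _ m
  let ev : (H d →L[ℂ] H d) →L[ℂ] ℂ :=
    (lp.evalCLM ℂ (fun _ : Fin d → ℤ => ℂ) 2 x).comp (ContinuousLinearMap.apply ℂ (H d) U)
  have h1 : pdH hk j U x = ∑' m, ev (halfTrans hk (phi d j m) m) := ev.map_tsum hs
  have h2 : ∀ m, ev (halfTrans hk (phi d j m) m)
      = (hw k x : ℂ) * (phi d j m * un k U (x - m)) := fun m => halfTrans_apply hk _ m U x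
  rw [h1]
  simp_rw [h2]
  rw [tsum_mul_left, pd, dconv, ← (Equiv.subLeft x).tsum_eq]
  congr 1
  refine tsum_congr fun m => ?_
  simp [mul_comm]

/-! ### Reduction of the wave equation to an ODE in `ℓ² × ℓ²` -/

/-- The first-order form `(u, v)' = (v, Δu + |A(u,v)|²)` of the wave equation. -/
def field {d k : ℕ} (hk : k = 0 ∨ k = 1) (A : H d × H d →L[ℂ] H d) (p : H d × H d) :
    H d × H d := (p.2, lapH hk p.1 + sqH (A p))

theorem field_lipschitz {d k : ℕ} (hk : k = 0 ∨ k = 1) (A : H d × H d →L[ℂ] H d) (R : ℝ) :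
    ∃ K : ℝ≥0, LipschitzOnWith K (field hk A) (Metric.closedBall 0 R) := by
  refine ⟨1 + ‖lapH (d := d) hk‖₊ + 2 * ‖A‖₊ * ‖A‖₊ * R.toNNReal,
    LipschitzOnWith.of_dist_le_mul fun p hp q hq => ?_⟩
  have hp' : ‖p‖ ≤ R := by simpa using hp
  have hq' : ‖q‖ ≤ R := by simpa using hq
  have hR : 0 ≤ R := (norm_nonneg p).trans hp'
  rw [dist_eq_norm, dist_eq_norm]
  push_cast
  rw [Real.coe_toNNReal R hR]
  have h1 : ‖p.1 - q.1‖ ≤ ‖p - q‖ := norm_fst_le (p - q)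
  have h2 : ‖p.2 - q.2‖ ≤ ‖p - q‖ := norm_snd_le (p - q)
  have hA : ‖A p - A q‖ ≤ ‖A‖ * ‖p - q‖ := by rw [← map_sub]; exact A.le_opNorm _
  have hL : ‖lapH hk p.1 - lapH hk q.1‖ ≤ ‖lapH (d := d) hk‖ * ‖p - q‖ := by
    rw [← map_sub]
    exact ((lapH hk).le_opNorm _).trans (by gcongr)
  have hS : ‖sqH (A p) - sqH (A q)‖ ≤ (‖A‖ * R + ‖A‖ * R) * (‖A‖ * ‖p - q‖) := by
    refine (sqH_sub_le _ _).trans ?_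
    gcongr
    · exact (A.le_opNorm _).trans (by gcongr)
    · exact (A.le_opNorm _).trans (by gcongr)
  have e : field hk A p - field hk A q = (p.2 - q.2,
      (lapH hk p.1 - lapH hk q.1) + (sqH (A p) - sqH (A q))) := by
    ext1
    · rfl
    · change (lapH hk p.1 + sqH (A p)) - (lapH hk q.1 + sqH (A q)) = _
      exact add_sub_add_comm _ _ _ _
  have n0 : 0 ≤ ‖p - q‖ := norm_nonneg _
  have n1 : 0 ≤ ‖lapH (d := d) hk‖ * ‖p - q‖ := by positivity
  have n2 : 0 ≤ 2 * ‖A‖ * ‖A‖ * R * ‖p - q‖ := by positivity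
  rw [e, Prod.norm_mk, max_le_iff]
  constructor
  · linarith
  · refine (norm_add_le _ _).trans ?_
    linarith

/-- Local well-posedness for any nonlinearity `N` for which `⟨x⟩^k N(u,∂ₜu) = |A(u,∂ₜu)|²` with a
bounded operator `A` (written on the unweighted side). -/
theorem wave_wellposed {d k : ℕ} (hk : k = 0 ∨ k = 1) (A : H d × H d →L[ℂ] H d)
    (N : ((Fin d → ℤ) → ℂ) → ((Fin d → ℤ) → ℂ) → (Fin d → ℤ) → ℝ)
    (hA : ∀ (p : H d × H d) x, wt k x * N (un k p.1) (un k p.2) x = ‖A p x‖ ^ 2)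
    (f g : (Fin d → ℤ) → ℂ) (hf : w2 k f < ⊤) (hg : w2 k g < ⊤) :
    ∃ T : ℝ, 0 < T ∧ ∃ u u1 u2,
      (IsC2 k (Set.Icc 0 T) u u1 u2 ∧
        (∀ t ∈ Set.Icc 0 T, ∀ x, u2 t x - lap (u t) x = ((N (u t) (u1 t) x : ℝ) : ℂ)) ∧
        (∀ x, u 0 x = f x) ∧ (∀ x, u1 0 x = g x)) ∧
      ∀ v v1 v2, (IsC2 k (Set.Icc 0 T) v v1 v2 ∧
        (∀ t ∈ Set.Icc 0 T, ∀ x, v2 t x - lap (v t) x = ((N (v t) (v1 t) x : ℝ) : ℂ)) ∧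
        (∀ x, v 0 x = f x) ∧ (∀ x, v1 0 x = g x)) →
          ∀ t ∈ Set.Icc (0 : ℝ) T, ∀ x, v t x = u t x := by
  obtain ⟨f', hf'⟩ := exists_of_w2_lt hf
  obtain ⟨g', hg'⟩ := exists_of_w2_lt hg
  have hfield : ∀ (p : H d × H d) x, (field hk A p).2 x
      = (wt k x : ℂ) * (lap (un k p.1) x + ((N (un k p.1) (un k p.2) x : ℝ) : ℂ)) := by
    intro p x
    rw [field, lp.coeFn_add, Pi.add_apply, lapH_apply, sqH_apply, ← hA]
    push_cast
    ring
  obtain ⟨T, hT, α, h0, hα⟩ := ode_exists (field hk A) (field_lipschitz hk A) (f', g')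
  have hcα : ContinuousOn α (Set.Icc 0 T) := fun t ht => (hα t ht).continuousWithinAt
  have hcF : ContinuousOn (fun t => field hk A (α t)) (Set.Icc 0 T) := by
    obtain ⟨B, hB⟩ := isCompact_Icc.exists_bound_of_continuousOn hcα
    obtain ⟨K, hK⟩ := field_lipschitz hk A B
    exact hK.continuousOn.comp hcα fun t ht => by simpa using hB t ht
  refine ⟨T, hT, fun t => un k (α t).1, fun t => un k (α t).2,
    fun t => un k (field hk A (α t)).2, ⟨?_, ?_, ?_, ?_⟩, ?_⟩
  · have e0 : ∀ t ∈ Set.Icc 0 T, ∀ m, (α t).1 m = (wt k m : ℂ) * un k (α t).1 m :=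
      fun t _ m => (wt_mul_un k _ m).symm
    have e1 : ∀ t ∈ Set.Icc 0 T, ∀ m, (α t).2 m = (wt k m : ℂ) * un k (α t).2 m :=
      fun t _ m => (wt_mul_un k _ m).symm
    have e2 : ∀ t ∈ Set.Icc 0 T, ∀ m, (field hk A (α t)).2 m
        = (wt k m : ℂ) * un k (field hk A (α t)).2 m :=
      fun t _ m => (wt_mul_un k _ m).symm
    exact
      { mem0 := fun t ht => by rw [w2_eq_s18 (e0 t ht)]; exact enorm_lt_top
        mem1 := fun t ht => by rw [w2_eq_s18 (e1 t ht)]; exact enorm_lt_top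
        mem2 := fun t ht => by rw [w2_eq_s18 (e2 t ht)]; exact enorm_lt_top
        cont0 := (contW_iff e0).2 (continuous_fst.comp_continuousOn hcα)
        cont1 := (contW_iff e1).2 (continuous_snd.comp_continuousOn hcα)
        cont2 := (contW_iff e2).2 (continuous_snd.comp_continuousOn hcF)
        hder1 := (derivW_iff e0 e1).2 fun t ht => (hα t ht).fst
        hder2 := (derivW_iff e1 e2).2 fun t ht => (hα t ht).snd }
  · intro t _ x
    have : un k (field hk A (α t)).2 x
        = lap (un k (α t).1) x + ((N (un k (α t).1) (un k (α t).2) x : ℝ) : ℂ) := by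
      rw [un, hfield, mul_div_cancel_left₀ _ (wt_ne k x)]
    beta_reduce
    rw [this]
    ring
  · intro x
    beta_reduce
    rw [h0]
    exact congrFun (un_eq hf') x
  · intro x
    beta_reduce
    rw [h0]
    exact congrFun (un_eq hg') x
  · rintro v v1 v2 ⟨hC, heq, hv0, hv1⟩ t ht x
    choose! V hV using fun t ht => exists_of_w2_lt (hC.mem0 t ht)
    choose! V1 hV1 using fun t ht => exists_of_w2_lt (hC.mem1 t ht)
    choose! V2 hV2 using fun t ht => exists_of_w2_lt (hC.mem2 t ht)
    have d1 := (derivW_iff hV hV1).1 hC.hder1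
    have d2 := (derivW_iff hV1 hV2).1 hC.hder2
    have hF2 : ∀ s ∈ Set.Icc 0 T, V2 s = (field hk A (V s, V1 s)).2 := by
      intro s hs
      ext y
      rw [hfield, hV2 s hs, un_eq (hV s hs), un_eq (hV1 s hs), ← heq s hs y]
      ring
    have hβ : ∀ s ∈ Set.Icc 0 T, HasDerivWithinAt (fun s => (V s, V1 s))
        (field hk A (V s, V1 s)) (Set.Icc 0 T) s := by
      intro s hs
      have := (d1 s hs).prodMk (d2 s hs)
      rw [hF2 s hs] at this
      exact this
    have h0T : (0 : ℝ) ∈ Set.Icc 0 T := ⟨le_rfl, hT.le⟩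
    have hinit : (V 0, V1 0) = α 0 := by
      rw [h0]
      congr 1
      · ext y
        rw [hV 0 h0T, hf', hv0]
      · ext y
        rw [hV1 0 h0T, hg', hv1]
    have := ode_unique (field hk A) (field_lipschitz hk A) hβ hα hinit ht
    beta_reduce
    rw [← this, un_eq (hV t ht)]

/-- local well-posedness of the discrete wave equation with quadratic
derivative nonlinearities `|∂ₜu|²` and `|∂ⱼu|²`: for each nonlinearity there exists
`T > 0` and a unique classical solution on `[0,T]`. -/
theorem stmt18 (d : ℕ) (hd : 0 < d) (k : ℕ) (hk : k = 0 ∨ k = 1)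
    (f g : (Fin d → ℤ) → ℂ) (hf : w2 k f < ⊤) (hg : w2 k g < ⊤) :
    (∃ T : ℝ, 0 < T ∧
      ∃ u u1 u2, SolQt d k f g (Set.Icc 0 T) u u1 u2 ∧
        ∀ v v1 v2, SolQt d k f g (Set.Icc 0 T) v v1 v2 →
          ∀ t ∈ Set.Icc (0 : ℝ) T, ∀ x, v t x = u t x) ∧
    ∀ j : Fin d, ∃ T : ℝ, 0 < T ∧
      ∃ u u1 u2, SolQj d k j f g (Set.Icc 0 T) u u1 u2 ∧
        ∀ v v1 v2, SolQj d k j f g (Set.Icc 0 T) v v1 v2 →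
          ∀ t ∈ Set.Icc (0 : ℝ) T, ∀ x, v t x = u t x := by
  refine ⟨?_, fun j => ?_⟩
  · refine wave_wellposed hk ((halfTrans hk 1 0).comp (ContinuousLinearMap.snd ℂ (H d) (H d)))
      (fun _ v x => ‖v x‖ ^ 2) (fun p x => ?_) f g hf hg
    rw [ContinuousLinearMap.comp_apply, ContinuousLinearMap.coe_snd', halfTrans_apply, sub_zero,
      one_mul, norm_mul, mul_pow, Complex.norm_real, Real.norm_eq_abs, sq_abs, hw_sq]
  · refine wave_wellposed hk ((pdH hk j).comp (ContinuousLinearMap.fst ℂ (H d) (H d)))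
      (fun u _ x => ‖pd j u x‖ ^ 2) (fun p x => ?_) f g hf hg
    rw [ContinuousLinearMap.comp_apply, ContinuousLinearMap.coe_fst', pdH_apply, norm_mul,
      mul_pow, Complex.norm_real, Real.norm_eq_abs, sq_abs, hw_sq]
end
end
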